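/- arXiv:1709.02546 — 2 statements merged into one kernel-verified Lean document; each statement's English description precedes it below -/
import Mathlib

section
/- Let n ≥ 2 and let f : Γ₊ → ℝ be smooth, symmetric, strictly positive, strictly increasing in each argument, positively homogeneous of degree one, and inverse concave. Then for every κ ∈ Γ₊ and every y ∈ ℝⁿ, Σ_{k,l} f̈^{kl}(κ) y_k y_l + 2 Σ_k (ḟ^k(κ)/κ_k) y_k² ≥ 2 f(κ)^{-1} (Σ_k ḟ^k(κ) y_k)². -/
/-!
For `κ ∈ Γ₊` and `y ∈ ℝⁿ`, let `γ` be the curve of `Γ₊` whose coordinatewise reciprocal is the line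
`t ↦ κ⁻¹ - t y / κ²`, so that `γ 0 = κ`, `γ' 0 = y` and `γ'' 0 = 2 y² / κ`. Along `γ` the function
`u = f ∘ γ` is the reciprocal of `f_*` restricted to a line. Hence `1 / u` is concave, which is
`2 (u')² / u ≤ u''`; at `t = 0` we have `u' = Df(y)` and `u'' = D²f(y, y) + Df(2 y² / κ)`.
-/

open Filter Topology Matrix

noncomputable section

/-- The open positive cone Γ₊ ⊂ ℝⁿ. -/
def posCone (n : ℕ) : Set (Fin n → ℝ) := {x | ∀ i, 0 < x i}

/-- The dual function f_*(x) = f(x₁⁻¹,…,xₙ⁻¹)⁻¹. -/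
def dualF (n : ℕ) (f : (Fin n → ℝ) → ℝ) : (Fin n → ℝ) → ℝ :=
  fun x => (f fun i => (x i)⁻¹)⁻¹

/-- First partial derivative ḟ^i(x) = ∂f/∂x_i(x). -/
def D1 (n : ℕ) (f : (Fin n → ℝ) → ℝ) (x : Fin n → ℝ) (i : Fin n) : ℝ :=
  fderiv ℝ f x (Pi.single i 1)

/-- Second partial derivative f̈^{ij}(x) = ∂²f/∂x_i∂x_j(x). -/
def D2 (n : ℕ) (f : (Fin n → ℝ) → ℝ) (x : Fin n → ℝ) (i j : Fin n) : ℝ :=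
  fderiv ℝ (fun y => fderiv ℝ f y (Pi.single i 1)) x (Pi.single j 1)

section Calculus

theorem nonpos_of_concaveOn_of_hasDerivAt {S : Set ℝ} {h h' : ℝ → ℝ} {x h'' : ℝ}
    (hS : S ∈ 𝓝 x) (hconc : ConcaveOn ℝ S h) (hh : ∀ t ∈ S, HasDerivAt h (h' t) t)
    (hh' : HasDerivAt h' h'' x) : h'' ≤ 0 := by
  have hanti : AntitoneOn h' S :=
    (hconc.antitoneOn_deriv fun t ht => (hh t ht).differentiableAt).congr
      fun t ht => (hh t ht).deriv
  calc h'' = derivWithin h' S x :=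
        (hh'.hasDerivWithinAt.derivWithin (uniqueDiffWithinAt_of_mem_nhds hS)).symm
    _ ≤ 0 := hanti.derivWithin_nonpos

theorem two_mul_inv_mul_sq_le_of_concaveOn_inv {S : Set ℝ} {u u' : ℝ → ℝ} {x u'' : ℝ}
    (hS : S ∈ 𝓝 x) (hconc : ConcaveOn ℝ S fun t => (u t)⁻¹) (hne : ∀ t ∈ S, u t ≠ 0)
    (hu : ∀ t ∈ S, HasDerivAt u (u' t) t) (hu' : HasDerivAt u' u'' x) :
    2 * (u x)⁻¹ * u' x ^ 2 ≤ u'' := by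
  have hx : x ∈ S := mem_of_mem_nhds hS
  have hux : u x ≠ 0 := hne x hx
  have hinv : ∀ t ∈ S, HasDerivAt (fun s => (u s)⁻¹) (-u' t / u t ^ 2) t :=
    fun t ht => (hu t ht).fun_inv (hne t ht)
  have hinv' : HasDerivAt (fun t => -u' t / u t ^ 2)
      ((2 * (u x)⁻¹ * u' x ^ 2 - u'') / u x ^ 2) x := by
    refine (hu'.fun_neg.fun_div ((hu x hx).fun_pow 2) (pow_ne_zero 2 hux)).congr_deriv ?_
    field_simp
    ring
  have hnonpos := nonpos_of_concaveOn_of_hasDerivAt hS hconc hinv hinv'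
  rwa [div_le_iff₀ (by positivity), zero_mul, sub_nonpos] at hnonpos

variable {𝕜 E F : Type*} [NontriviallyNormedField 𝕜] [NormedAddCommGroup E] [NormedSpace 𝕜 E]
  [NormedAddCommGroup F] [NormedSpace 𝕜 F] {f : E → F}

theorem differentiableAt_fderiv_of_contDiffAt {x : E} (hf : ContDiffAt 𝕜 2 f x) :
    DifferentiableAt 𝕜 (fderiv 𝕜 f) x :=
  (hf.fderiv_right one_add_one_eq_two.le).differentiableAt one_ne_zero

theorem hasDerivAt_fderiv_apply_comp {γ γ' : 𝕜 → E} {γ'' : E} {t : 𝕜}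
    (hf : DifferentiableAt 𝕜 (fderiv 𝕜 f) (γ t)) (hγ : HasDerivAt γ (γ' t) t)
    (hγ' : HasDerivAt γ' γ'' t) :
    HasDerivAt (fun s => fderiv 𝕜 f (γ s) (γ' s))
      (fderiv 𝕜 (fderiv 𝕜 f) (γ t) (γ' t) (γ' t) + fderiv 𝕜 f (γ t) γ'') t :=
  (hf.hasFDerivAt.comp_hasDerivAt t hγ).clm_apply hγ'

end Calculus

section Reciprocal

variable {𝕜 ι : Type*} [NontriviallyNormedField 𝕜] {L : 𝕜 → ι → 𝕜} {v : ι → 𝕜} {t : 𝕜}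

theorem hasDerivAt_inv_pi (hL : HasDerivAt L v t) (hne : ∀ i, L t i ≠ 0) :
    HasDerivAt (fun s => (L s)⁻¹) (-v / L t ^ 2) t :=
  hasDerivAt_pi.2 fun i => (hasDerivAt_pi.1 hL i).fun_inv (hne i)

theorem hasDerivAt_neg_div_sq_pi (hL : HasDerivAt L v t) (hne : ∀ i, L t i ≠ 0) :
    HasDerivAt (fun s => -v / L s ^ 2) (2 * v ^ 2 / L t ^ 3) t := by
  refine hasDerivAt_pi.2 fun i => ?_
  have hi := hne i
  refine ((hasDerivAt_const t (-v i)).fun_div ((hasDerivAt_pi.1 hL i).fun_pow 2)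
    (pow_ne_zero 2 hi)).congr_deriv ?_
  simp only [Pi.div_apply, Pi.mul_apply, Pi.pow_apply, Pi.ofNat_apply]
  field_simp
  ring

end Reciprocal

section Coordinates

theorem map_eq_sum_smul_map_single {ι R M F : Type*} [Fintype ι] [DecidableEq ι] [Semiring R]
    [AddCommMonoid M] [Module R M] [FunLike F (ι → R) M] [LinearMapClass F R (ι → R) M]
    (T : F) (z : ι → R) : T z = ∑ i, z i • T (Pi.single i 1) := by
  conv_lhs => rw [pi_eq_sum_univ' z]
  simp only [map_sum, map_smul]

variable {n : ℕ} {f : (Fin n → ℝ) → ℝ} {x : Fin n → ℝ}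

theorem fderiv_apply_eq_sum_D1 (f : (Fin n → ℝ) → ℝ) (x y : Fin n → ℝ) :
    fderiv ℝ f x y = ∑ k, D1 n f x k * y k := by
  simp only [map_eq_sum_smul_map_single (fderiv ℝ f x) y, D1, smul_eq_mul, mul_comm]

theorem D2_eq_fderiv_fderiv (hf : DifferentiableAt ℝ (fderiv ℝ f) x) (k l : Fin n) :
    D2 n f x k l = fderiv ℝ (fderiv ℝ f) x (Pi.single l 1) (Pi.single k 1) := by
  simp [D2, fderiv_clm_apply hf (differentiableAt_const _)]

theorem fderiv_fderiv_apply_eq_sum_D2 (hf : DifferentiableAt ℝ (fderiv ℝ f) x)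
    (y : Fin n → ℝ) :
    fderiv ℝ (fderiv ℝ f) x y y = ∑ k, ∑ l, D2 n f x k l * y k * y l := by
  have hrow (k : Fin n) :
      fderiv ℝ (fderiv ℝ f) x y (Pi.single k 1) = ∑ l, y l * D2 n f x k l := by
    simpa only [ContinuousLinearMap.flip_apply, smul_eq_mul, D2_eq_fderiv_fderiv hf] using
      map_eq_sum_smul_map_single ((fderiv ℝ (fderiv ℝ f) x).flip (Pi.single k 1)) y
  rw [map_eq_sum_smul_map_single (fderiv ℝ (fderiv ℝ f) x y)]
  simp only [hrow, smul_eq_mul, Finset.mul_sum]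
  congr! 2
  ring

end Coordinates

section PosCone

variable {n : ℕ} {f : (Fin n → ℝ) → ℝ} {x : Fin n → ℝ}

theorem isOpen_posCone (n : ℕ) : IsOpen (posCone n) := by
  simp only [posCone, Set.ofPred_forall]
  exact isOpen_iInter_of_finite fun i => isOpen_lt continuous_const (continuous_apply i)

theorem inv_mem_posCone (hx : x ∈ posCone n) : x⁻¹ ∈ posCone n :=
  fun i => inv_pos.2 (hx i)

/- This is `D²f_*(x)(v, v) ≤ 0` multiplied by `f(x⁻¹)²`. -/
theorem two_mul_inv_mul_sq_fderiv_inv_le (hf : ContDiffOn ℝ 2 f (posCone n))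
    (hne : ∀ x ∈ posCone n, f x ≠ 0) (hconc : ConcaveOn ℝ (posCone n) (dualF n f))
    (hx : x ∈ posCone n) (v : Fin n → ℝ) :
    2 * (f x⁻¹)⁻¹ * fderiv ℝ f x⁻¹ (-v / x ^ 2) ^ 2 ≤
      fderiv ℝ (fderiv ℝ f) x⁻¹ (-v / x ^ 2) (-v / x ^ 2) +
        fderiv ℝ f x⁻¹ (2 * v ^ 2 / x ^ 3) := by
  let L : ℝ →ᵃ[ℝ] (Fin n → ℝ) := AffineMap.lineMap x (x + v)
  let S : Set ℝ := L ⁻¹' posCone n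
  let u : ℝ → ℝ := fun t => f (L t)⁻¹
  have hL (t : ℝ) : HasDerivAt L v t :=
    AffineMap.hasDerivAt_lineMap.congr_deriv (add_sub_cancel_left x v)
  have hL0 : L 0 = x := AffineMap.lineMap_apply_zero _ _
  have hS : S ∈ 𝓝 0 :=
    (hL 0).continuousAt.preimage_mem_nhds ((isOpen_posCone n).mem_nhds (hL0 ▸ hx))
  have hγ (t : ℝ) (ht : t ∈ S) : HasDerivAt (fun s => (L s)⁻¹) (-v / L t ^ 2) t :=
    hasDerivAt_inv_pi (hL t) fun i => (ht i).ne'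
  have hfγ (t : ℝ) (ht : t ∈ S) : ContDiffAt ℝ 2 f (L t)⁻¹ :=
    hf.contDiffAt ((isOpen_posCone n).mem_nhds (inv_mem_posCone ht))
  have hu (t : ℝ) (ht : t ∈ S) : HasDerivAt u (fderiv ℝ f (L t)⁻¹ (-v / L t ^ 2)) t :=
    ((hfγ t ht).differentiableAt two_ne_zero).hasFDerivAt.comp_hasDerivAt t (hγ t ht)
  have h0 : (0 : ℝ) ∈ S := mem_of_mem_nhds hS
  have hu' := hasDerivAt_fderiv_apply_comp (γ := fun t => (L t)⁻¹)
    (differentiableAt_fderiv_of_contDiffAt (hfγ 0 h0)) (hγ 0 h0)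
    (hasDerivAt_neg_div_sq_pi (hL 0) fun i => (h0 i).ne')
  have hu_conc : ConcaveOn ℝ S fun t => (u t)⁻¹ := hconc.comp_affineMap L
  simpa only [u, hL0] using two_mul_inv_mul_sq_le_of_concaveOn_inv hS hu_conc
    (fun t ht => hne _ (inv_mem_posCone ht)) hu hu'

theorem two_mul_inv_mul_sq_fderiv_le (hf : ContDiffOn ℝ 2 f (posCone n))
    (hne : ∀ x ∈ posCone n, f x ≠ 0) (hconc : ConcaveOn ℝ (posCone n) (dualF n f))
    (hx : x ∈ posCone n) (y : Fin n → ℝ) :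
    2 * (f x)⁻¹ * fderiv ℝ f x y ^ 2 ≤
      fderiv ℝ (fderiv ℝ f) x y y + fderiv ℝ f x (2 * y ^ 2 / x) := by
  have hx0 (i : Fin n) : x i ≠ 0 := (hx i).ne'
  have hvelocity : -(-(y / x ^ 2)) / x⁻¹ ^ 2 = y := by
    ext i
    simp [hx0 i]
  have hacceleration : 2 * (-(y / x ^ 2)) ^ 2 / x⁻¹ ^ 3 = 2 * y ^ 2 / x := by
    ext i
    have := hx0 i
    simp only [Pi.div_apply, Pi.mul_apply, Pi.pow_apply, Pi.neg_apply, Pi.inv_apply]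
    field_simp
  have hdual := two_mul_inv_mul_sq_fderiv_inv_le hf hne hconc (inv_mem_posCone hx) (-(y / x ^ 2))
  rwa [hvelocity, hacceleration, inv_inv] at hdual

end PosCone

theorem inverse_concave_quadratic_ineq_general (n : ℕ) (f : (Fin n → ℝ) → ℝ)
    (hf : ContDiffOn ℝ 2 f (posCone n)) (hne : ∀ x ∈ posCone n, f x ≠ 0)
    (hconc : ConcaveOn ℝ (posCone n) (dualF n f)) :
    ∀ κ ∈ posCone n, ∀ y : Fin n → ℝ,
      2 * (f κ)⁻¹ * (∑ k, D1 n f κ k * y k) ^ 2 ≤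
        (∑ k, ∑ l, D2 n f κ k l * y k * y l)
          + 2 * ∑ k, (D1 n f κ k / κ k) * (y k) ^ 2 := by
  intro κ hκ y
  have hfκ : DifferentiableAt ℝ (fderiv ℝ f) κ :=
    differentiableAt_fderiv_of_contDiffAt (hf.contDiffAt ((isOpen_posCone n).mem_nhds hκ))
  calc 2 * (f κ)⁻¹ * (∑ k, D1 n f κ k * y k) ^ 2
      = 2 * (f κ)⁻¹ * fderiv ℝ f κ y ^ 2 := by rw [fderiv_apply_eq_sum_D1]
    _ ≤ fderiv ℝ (fderiv ℝ f) κ y y + fderiv ℝ f κ (2 * y ^ 2 / κ) :=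
      two_mul_inv_mul_sq_fderiv_le hf hne hconc hκ y
    _ = (∑ k, ∑ l, D2 n f κ k l * y k * y l)
          + 2 * ∑ k, (D1 n f κ k / κ k) * (y k) ^ 2 := by
      rw [fderiv_fderiv_apply_eq_sum_D2 hfκ, fderiv_apply_eq_sum_D1, Finset.mul_sum]
      congr! 2 with k
      simp only [Pi.div_apply, Pi.mul_apply, Pi.pow_apply, Pi.ofNat_apply]
      ring

/-- if `f` is inverse concave then
`Σ_{k,l} f̈^{kl} y_k y_l + 2 Σ_k (ḟ^k/κ_k) y_k² ≥ 2 f(κ)⁻¹ (Σ_k ḟ^k y_k)²`. -/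
theorem inverse_concave_quadratic_ineq (n : ℕ) (hn : 2 ≤ n) (f : (Fin n → ℝ) → ℝ)
    (hsmooth : ContDiffOn ℝ (⊤ : ℕ∞) f (posCone n))
    (hsym : ∀ σ : Equiv.Perm (Fin n), ∀ x ∈ posCone n, f (x ∘ σ) = f x)
    (hpos : ∀ x ∈ posCone n, 0 < f x)
    (hmono : ∀ x ∈ posCone n, ∀ i, 0 < D1 n f x i)
    (hhom : ∀ k : ℝ, 0 < k → ∀ x ∈ posCone n, f (k • x) = k * f x)
    (hinvconc : ConcaveOn ℝ (posCone n) (dualF n f)) :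
    ∀ κ ∈ posCone n, ∀ y : Fin n → ℝ,
      2 * (f κ)⁻¹ * (∑ k, D1 n f κ k * y k) ^ 2 ≤
        (∑ k, ∑ l, D2 n f κ k l * y k * y l)
          + 2 * ∑ k, (D1 n f κ k / κ k) * (y k) ^ 2 :=
  inverse_concave_quadratic_ineq_general n f
    (hsmooth.of_le (WithTop.coe_le_coe.2 le_top)) (fun x hx => (hpos x hx).ne') hinvconc
end
end

section
/- Let n ≥ 2 and let f : Γ₊ → ℝ be smooth, symmetric, convex, strictly positive, positively homogeneous of degree one, and normalized so that f(1, …, 1) = n. Then the dual function satisfies f_*(z) ≤ (Σ_{i=1}^n z_i^{-1})^{-1} for every z ∈ Γ₊ (equivalently, f_*(z) ≤ E_n(z)/(n E_{n-1}(z)), where E_j denotes the normalized elementary symmetric polynomial). -/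
open Filter Topology Matrix

noncomputable section

/-!
The average of a vector over the coordinate permutations of a transitive group is the constant
vector whose entries are its mean. Hence a convex sublevel set of a symmetric `f` that contains `x`
also contains the constant vector of the mean of `x`, where homogeneity and the normalization give
`f` the value `∑ i, x i`. So `∑ i, x i ≤ f x`, and taking `x = z⁻¹` and inverting gives the bound.
-/

section Averaging

open scoped BigOperators

theorem expect_smul_eq_expect {G ι M : Type*} [Group G] [Fintype G] [Fintype ι] [MulAction G ι]
    [MulAction.IsPretransitive G ι] [AddCommMonoid M] [Module ℚ≥0 M] (x : ι → M) (i : ι) :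
    𝔼 g : G, x (g • i) = 𝔼 j, x j := by
  have : Nonempty ι := ⟨i⟩
  have independent_of_index (j : ι) : 𝔼 g : G, x (g • j) = 𝔼 g : G, x (g • i) := by
    obtain ⟨h, rfl⟩ := MulAction.exists_smul_eq G i j
    exact Fintype.expect_equiv (Equiv.mulRight h) _ _ fun g ↦ by
      rw [Equiv.coe_mulRight, mul_smul]
  calc 𝔼 g : G, x (g • i)
      = 𝔼 j, 𝔼 g : G, x (g • j) := by simp only [independent_of_index, Fintype.expect_const]
    _ = 𝔼 g : G, 𝔼 j, x (g • j) := Finset.expect_comm ..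
    _ = 𝔼 _g : G, 𝔼 j, x j := Finset.expect_congr rfl fun g _ ↦
        Fintype.expect_equiv (MulAction.toPerm g) _ _ fun _ ↦ rfl
    _ = 𝔼 j, x j := Fintype.expect_const _

variable {𝕜 : Type*} [Field 𝕜] [LinearOrder 𝕜] [IsStrictOrderedRing 𝕜]

theorem expect_mem_of_convex {ι E : Type*} [Fintype ι] [Nonempty ι] [AddCommGroup E] [Module 𝕜 E]
    [Module ℚ≥0 E] {s : Set E} (hs : Convex 𝕜 s) {p : ι → E} (hp : ∀ i, p i ∈ s) :
    𝔼 i, p i ∈ s := by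
  have hcard : (Fintype.card ι : 𝕜) ≠ 0 := Nat.cast_ne_zero.mpr Fintype.card_ne_zero
  have expect_eq_sum : 𝔼 i, p i = ∑ i, (Fintype.card ι : 𝕜)⁻¹ • p i := by
    rw [Finset.expect_univ, ← Finset.smul_sum, ← NNRat.cast_smul_eq_nnqsmul 𝕜]
    push_cast
    rfl
  rw [expect_eq_sum]
  exact hs.sum_mem (fun _ _ ↦ by positivity) (by simp [hcard]) fun i _ ↦ hp i

variable {ι : Type*} [Fintype ι] (G : Type*) [Group G] [Finite G] [MulAction G ι]
  [MulAction.IsPretransitive G ι]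

theorem const_expect_mem_of_convex {E : Type*} [AddCommGroup E] [Module 𝕜 E] [Module ℚ≥0 E]
    {s : Set (ι → E)} (hs : Convex 𝕜 s) {x : ι → E} (hx : ∀ g : G, (fun i ↦ x (g • i)) ∈ s) :
    (fun _ ↦ 𝔼 j, x j) ∈ s := by
  cases nonempty_fintype G
  have average_eq : 𝔼 g : G, (fun i ↦ x (g • i)) = fun _ ↦ 𝔼 j, x j := by
    funext i
    rw [← expect_smul_eq_expect (G := G) x i]
    exact map_expect (LinearMap.proj (R := ℚ≥0) (φ := fun _ : ι ↦ E) i) _ _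
  exact average_eq ▸ expect_mem_of_convex hs hx

theorem map_const_expect_le_of_quasiconvexOn {E β : Type*} [AddCommGroup E] [Module 𝕜 E]
    [Module ℚ≥0 E] [LE β] {s : Set (ι → E)} {f : (ι → E) → β} (hf : QuasiconvexOn 𝕜 s f)
    {x : ι → E} (hx : ∀ g : G, (fun i ↦ x (g • i)) ∈ s)
    (hinv : ∀ g : G, f (fun i ↦ x (g • i)) ≤ f x) :
    f (fun _ ↦ 𝔼 j, x j) ≤ f x :=
  (const_expect_mem_of_convex G (hf (f x)) fun g ↦ ⟨hx g, hinv g⟩).2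

theorem sum_le_of_quasiconvexOn_of_invariant [Nonempty ι] {f : (ι → 𝕜) → 𝕜}
    (hf : QuasiconvexOn 𝕜 {x | ∀ i, 0 < x i} f)
    (hinv : ∀ g : G, ∀ x : ι → 𝕜, (∀ i, 0 < x i) → f (fun i ↦ x (g • i)) = f x)
    (hconst : ∀ k : 𝕜, 0 < k → Fintype.card ι * k ≤ f fun _ ↦ k)
    {x : ι → 𝕜} (hx : ∀ i, 0 < x i) :
    ∑ i, x i ≤ f x :=
  calc ∑ i, x i
      = Fintype.card ι * 𝔼 i, x i := (Fintype.card_mul_expect x).symm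
    _ ≤ f fun _ ↦ 𝔼 i, x i :=
        hconst _ (Finset.expect_pos (fun i _ ↦ hx i) Finset.univ_nonempty)
    _ ≤ f x := map_const_expect_le_of_quasiconvexOn G hf (fun g i ↦ hx (g • i))
        fun g ↦ (hinv g x hx).le

theorem convex_dual_le_harmonic_general [Nonempty ι] {f : (ι → 𝕜) → 𝕜}
    (hf : QuasiconvexOn 𝕜 {x | ∀ i, 0 < x i} f)
    (hinv : ∀ g : G, ∀ x : ι → 𝕜, (∀ i, 0 < x i) → f (fun i ↦ x (g • i)) = f x)
    (hconst : ∀ k : 𝕜, 0 < k → Fintype.card ι * k ≤ f fun _ ↦ k)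
    {z : ι → 𝕜} (hz : ∀ i, 0 < z i) :
    (f fun i ↦ (z i)⁻¹)⁻¹ ≤ (∑ i, (z i)⁻¹)⁻¹ := by
  have hz_inv (i : ι) : 0 < (z i)⁻¹ := inv_pos.mpr (hz i)
  exact inv_anti₀ (Finset.sum_pos (fun i _ ↦ hz_inv i) Finset.univ_nonempty)
    (sum_le_of_quasiconvexOn_of_invariant G hf hinv hconst hz_inv)

end Averaging

/-- a smooth, symmetric, convex, positive, 1-homogeneous `f` on Γ₊ normalized by
`f(1,…,1) = n` has dual bounded by `f_*(z) ≤ (Σ_i z_i⁻¹)⁻¹`. -/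
theorem convex_dual_le_harmonic (n : ℕ) (hn : 2 ≤ n) (f : (Fin n → ℝ) → ℝ)
    (hsmooth : ContDiffOn ℝ (⊤ : ℕ∞) f (posCone n))
    (hsym : ∀ σ : Equiv.Perm (Fin n), ∀ x ∈ posCone n, f (x ∘ σ) = f x)
    (hconv : ConvexOn ℝ (posCone n) f)
    (hpos : ∀ x ∈ posCone n, 0 < f x)
    (hhom : ∀ k : ℝ, 0 < k → ∀ x ∈ posCone n, f (k • x) = k * f x)
    (hnorm : f (fun _ => 1) = n) :
    ∀ z ∈ posCone n, dualF n f z ≤ (∑ i, (z i)⁻¹)⁻¹ := by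
  have : NeZero n := ⟨by omega⟩
  have map_const (k : ℝ) (hk : 0 < k) : f (fun _ ↦ k) = n * k := by
    have const_eq : (fun _ ↦ k : Fin n → ℝ) = k • fun _ ↦ 1 := by ext; simp
    rw [const_eq, hhom k hk _ fun _ ↦ one_pos, hnorm, mul_comm]
  intro z hz
  exact convex_dual_le_harmonic_general (Equiv.Perm (Fin n)) hconv.quasiconvexOn hsym
    (fun k hk ↦ by rw [Fintype.card_fin, map_const k hk]) hz
end
end
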